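/- Let G be a group acting faithfully on a set Z, let Z₀ ⊆ Z, and let G₀ = {h ∈ G | h fixes every point of Z outside Z₀}. Let g ∈ G be such that (g^p • Z₀) ∩ Z₀ = ∅ for every integer p ≥ 1. Then for all integers p ≠ q, every element of g^p G₀ g^{−p} commutes with every element of g^q G₀ g^{−q}; that is, for all a, b ∈ G₀, (g^p a g^{−p})(g^q b g^{−q}) = (g^q b g^{−q})(g^p a g^{−p}). -/

import Mathlib

section

open scoped Pointwise

variable {G Z : Type*} [Group G] [MulAction G Z]

theorem commute_of_mem_fixingSubgroup_compl_of_disjoint [FaithfulSMul G Z] {s t : Set Z}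
    (hst : Disjoint s t) {x y : G} (hx : x ∈ fixingSubgroup G sᶜ)
    (hy : y ∈ fixingSubgroup G tᶜ) : Commute x y := by
  rw [mem_fixingSubgroup_iff] at hx hy
  have disjoint_perms : (MulAction.toPermHom G Z x).Disjoint (MulAction.toPermHom G Z y) :=
    fun z ↦ (em (z ∈ s)).symm.imp (hx z) fun hz ↦ hy z (hst.notMem_of_mem_left hz)
  exact disjoint_perms.commute.of_map MulAction.toPerm_injective

theorem conj_mem_fixingSubgroup_compl_smul {s : Set Z} {x : G}
    (hx : x ∈ fixingSubgroup G sᶜ) (g : G) : g * x * g⁻¹ ∈ fixingSubgroup G (g • s)ᶜ :=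
  Set.conj_mem_fixingSubgroup Set.smul_set_compl hx

theorem pairwise_disjoint_zpow_smul {s : Set Z} {g : G}
    (hg : ∀ n : ℤ, 0 < n → Disjoint (g ^ n • s) s) :
    Pairwise (Function.onFun Disjoint fun n : ℤ ↦ g ^ n • s) := by
  refine (pairwise_disjoint_on _).2 fun m n hmn ↦ ?_
  have translate : g ^ n • s = g ^ m • g ^ (n - m) • s := by
    rw [smul_smul, ← zpow_add, add_sub_cancel]
  rw [translate, Set.disjoint_smul_set]
  exact (hg (n - m) (sub_pos.2 hmn)).symm

end

open Pointwise in
/-- If `G` acts faithfully on `Z`, the subgroup `G₀` of elements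
supported in `Z₀ ⊆ Z` has the property that its conjugates by distinct powers of an
element `g` with `g^p • Z₀ ∩ Z₀ = ∅` for all `p ≥ 1` commute pairwise. -/
theorem commuting_conjugates_of_disjoint_supports
    {G Z : Type*} [Group G] [MulAction G Z] [FaithfulSMul G Z]
    (Z₀ : Set Z) (g : G)
    (hdisj : ∀ p : ℤ, 1 ≤ p → Disjoint (g ^ p • Z₀) Z₀)
    (p q : ℤ) (hpq : p ≠ q) (a b : G)
    (ha : ∀ z : Z, z ∉ Z₀ → a • z = z) (hb : ∀ z : Z, z ∉ Z₀ → b • z = z) :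
    (g ^ p * a * g ^ (-p)) * (g ^ q * b * g ^ (-q)) =
    (g ^ q * b * g ^ (-q)) * (g ^ p * a * g ^ (-p)) := by
  have disjoint_translates : Disjoint (g ^ p • Z₀) (g ^ q • Z₀) :=
    pairwise_disjoint_zpow_smul hdisj hpq
  have a_mem : a ∈ fixingSubgroup G Z₀ᶜ := (mem_fixingSubgroup_iff G).2 ha
  have b_mem : b ∈ fixingSubgroup G Z₀ᶜ := (mem_fixingSubgroup_iff G).2 hb
  rw [zpow_neg, zpow_neg]
  exact (commute_of_mem_fixingSubgroup_compl_of_disjoint disjoint_translates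
    (conj_mem_fixingSubgroup_compl_smul a_mem _) (conj_mem_fixingSubgroup_compl_smul b_mem _)).eq
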